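/- Let n ≥ 2, let X be B or C, let A be the Cartan matrix of type X_n and ι an admissible sequence adapted to A. Let T = [j_1,…,j_k]^X_s ∈ Tab_{X,ι} and t ∈ [1,n−1], and suppose there exists i ∈ [1,k] with j_i = t and j_{i+1} ≠ t+1. Set M' := s+k−i+P(t). Then M' ≥ 1 and: (1) the coefficient of x_{M',t} in T is 0, 1 or 2; (2) this coefficient is 0 if and only if j_{i+n−t+1} = ovl(t) and j_{i+n−t} ≠ ovl(t+1); (3) this coefficient is 2 if and only if j_{i+n−t+1} ≠ ovl(t) and j_{i+n−t} = ovl(t+1); and (4) if this coefficient is 1, then S_{M',t}T equals the tableau obtained from T by replacing the entry j_i = t by t+1. -/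

import Mathlib

noncomputable section

/-- The coordinate linear form `x_k` (as a coefficient vector). -/
def xc (k : ℕ) : ℕ → ℚ := fun l => if l = k then 1 else 0

/-- Cartan matrix of type `A_n`. -/
def cartanA (_n : ℕ) (i j : ℕ) : ℤ :=
  if i = j then 2 else if i + 1 = j ∨ j + 1 = i then -1 else 0

/-- Cartan matrix of type `B_n`. -/
def cartanB (n : ℕ) (i j : ℕ) : ℤ :=
  if i = j then 2
  else if i = n ∧ j = n - 1 then -2
  else if i + 1 = j ∨ j + 1 = i then -1 else 0

/-- Cartan matrix of type `C_n`. -/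
def cartanC (n : ℕ) (i j : ℕ) : ℤ :=
  if i = j then 2
  else if i = n - 1 ∧ j = n then -2
  else if i + 1 = j ∨ j + 1 = i then -1 else 0

/-- Cartan matrix of type `D_n`. -/
def cartanD (n : ℕ) (i j : ℕ) : ℤ :=
  if i = j then 2
  else if (i = n - 1 ∧ j = n) ∨ (i = n ∧ j = n - 1) then 0
  else if (i + 1 = j ∨ j + 1 = i) ∨ (i = n ∧ j = n - 2) ∨ (i = n - 2 ∧ j = n) then -1
  else 0

/-- `ι` (with positions indexed by `k ≥ 1`) takes values in `{1,…,n}`, has no two equal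
consecutive entries, and every index occurs infinitely often. -/
def Admissible (n : ℕ) (ι : ℕ → ℕ) : Prop :=
  (∀ k, 1 ≤ k → 1 ≤ ι k ∧ ι k ≤ n) ∧
  (∀ k, 1 ≤ k → ι k ≠ ι (k + 1)) ∧
  (∀ i, 1 ≤ i → i ≤ n → ∀ N, ∃ k, N ≤ k ∧ ι k = i)

/-- `k^+`: the next position after `k` carrying the same letter. -/
def kplus (ι : ℕ → ℕ) (k : ℕ) : ℕ := sInf {l | k < l ∧ ι l = ι k}

/-- `k^-`: the previous position (`≥ 1`) carrying the same letter, `0` if none. -/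
def kminus (ι : ℕ → ℕ) (k : ℕ) : ℕ := sSup {l | 0 < l ∧ l < k ∧ ι l = ι k}

/-- The linear form `β_k` (with `β_0 = 0`). -/
def beta (A : ℕ → ℕ → ℤ) (ι : ℕ → ℕ) (k : ℕ) : ℕ → ℚ :=
  if k = 0 then 0
  else xc k + (∑ j ∈ Finset.Ioo k (kplus ι k), (A (ι k) (ι j) : ℚ) • xc j) + xc (kplus ι k)

/-- The piecewise-linear operator `S_k`. -/
def Sop (A : ℕ → ℕ → ℤ) (ι : ℕ → ℕ) (k : ℕ) (φ : ℕ → ℚ) : ℕ → ℚ :=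
  if 0 < φ k then φ - φ k • beta A ι k
  else φ - φ k • beta A ι (kminus ι k)

/-- Membership in `Ξ_ι`: forms obtained from some `x_{j_0}` by finitely many operators `S_k`. -/
inductive XiMem (A : ℕ → ℕ → ℤ) (ι : ℕ → ℕ) : (ℕ → ℚ) → Prop
  | base (k : ℕ) (hk : 1 ≤ k) : XiMem A ι (xc k)
  | step (k : ℕ) (hk : 1 ≤ k) (φ : ℕ → ℚ) (h : XiMem A ι φ) : XiMem A ι (Sop A ι k φ)

/-- The set `Ξ_ι`. -/
def Xi (A : ℕ → ℕ → ℤ) (ι : ℕ → ℕ) : Set (ℕ → ℚ) := { φ | XiMem A ι φ }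

/-- Forms obtained from a set `g` of generators by finitely many operators `S_k`. -/
inductive XiMemFrom (A : ℕ → ℕ → ℤ) (ι : ℕ → ℕ) (g : Set (ℕ → ℚ)) : (ℕ → ℚ) → Prop
  | base (φ : ℕ → ℚ) (h : φ ∈ g) : XiMemFrom A ι g φ
  | step (k : ℕ) (hk : 1 ≤ k) (φ : ℕ → ℚ) (h : XiMemFrom A ι g φ) :
      XiMemFrom A ι g (Sop A ι k φ)

/-- `ι` is adapted to the Cartan matrix `A`: for `i ≠ j` with `a_{i,j} ≠ 0`, consecutive
members of the subsequence of `ι` consisting of the letters `i`, `j` are distinct. -/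
def Adapted (n : ℕ) (A : ℕ → ℕ → ℤ) (ι : ℕ → ℕ) : Prop :=
  ∀ i j, 1 ≤ i → i ≤ n → 1 ≤ j → j ≤ n → i ≠ j → A i j ≠ 0 →
    ∀ k l, 1 ≤ k → k < l → (ι k = i ∨ ι k = j) → (ι l = i ∨ ι l = j) →
      (∀ m, k < m → m < l → ι m ≠ i ∧ ι m ≠ j) → ι k ≠ ι l

/-- Position of the first occurrence of the letter `i` in `ι`. -/
def firstOcc (ι : ℕ → ℕ) (i : ℕ) : ℕ := sInf {k | 1 ≤ k ∧ ι k = i}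

/-- `p_{i,j} = 1` iff the first occurrence of `i` precedes the first occurrence of `j`. -/
def pval (ι : ℕ → ℕ) (i j : ℕ) : ℕ := if firstOcc ι i < firstOcc ι j then 1 else 0

/-- The function `P(k)` for types A, B, C (and `P(k) = 0` for `k > n`, `k ≤ 1`). -/
def PABC (ι : ℕ → ℕ) (n k : ℕ) : ℕ :=
  if k ≤ n then ∑ t ∈ Finset.Icc 2 k, pval ι t (t - 1) else 0

/-- The function `P(k)` for type D. -/
def PD (ι : ℕ → ℕ) (n k : ℕ) : ℕ :=
  if k = n then (∑ t ∈ Finset.Icc 2 (n - 2), pval ι t (t - 1)) + pval ι n (n - 2)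
  else if k ≤ n then ∑ t ∈ Finset.Icc 2 k, pval ι t (t - 1) else 0

/-- `occPos ι j s`: the position of the `s`-th occurrence of the letter `j` in `ι`
(`0` for `s = 0`). -/
def occPos (ι : ℕ → ℕ) (j : ℕ) : ℕ → ℕ
  | 0 => 0
  | s + 1 => sInf {k | occPos ι j s < k ∧ ι k = j}

/-- The double-indexed coordinate form `x_{s,j}`, with the conventions
`x_{s,0} = x_{s,n+1} = 0` and `x_{s,j} = 0` for `s ≤ 0`. -/
def xsj (ι : ℕ → ℕ) (n : ℕ) (s : ℤ) (j : ℕ) : ℕ → ℚ :=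
  if 1 ≤ s ∧ 1 ≤ j ∧ j ≤ n then xc (occPos ι j s.toNat) else 0

/-- The double-indexed form `β_{s,j}`. -/
def betasj (A : ℕ → ℕ → ℤ) (ι : ℕ → ℕ) (s : ℤ) (j : ℕ) : ℕ → ℚ :=
  beta A ι (occPos ι j s.toNat)

/-- The double-indexed operator `S_{m,j}`. -/
def Ssj (A : ℕ → ℕ → ℤ) (ι : ℕ → ℕ) (m j : ℕ) (φ : ℕ → ℚ) : ℕ → ℚ :=
  Sop A ι (occPos ι j m) φ

/- Entries of the ordered sets `J_X` are encoded as natural numbers: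
an unbarred entry `j ∈ {1,…,n}` is encoded as `j`, a barred entry `j̄` is
encoded as `2n+1-j` (so that `n̄ = n+1, …, 1̄ = 2n` and the total order of
`J_B = J_C` is the numerical order), and the extra symbol `ovl(n+1)` of
types C and D is encoded as `0`. -/

/-- The box of type A. -/
def boxA (ι : ℕ → ℕ) (n : ℕ) (s : ℤ) (j : ℕ) : ℕ → ℚ :=
  xsj ι n (s + (PABC ι n j : ℤ)) j - xsj ι n (s + (PABC ι n (j - 1) : ℤ) + 1) (j - 1)

/-- The box of type B. -/
def boxB (ι : ℕ → ℕ) (n : ℕ) (s : ℤ) (e : ℕ) : ℕ → ℚ :=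
  if e ≤ n then
    xsj ι n (s + (PABC ι n e : ℤ)) e - xsj ι n (s + (PABC ι n (e - 1) : ℤ) + 1) (e - 1)
  else
    xsj ι n (s + (PABC ι n (2 * n - e) : ℤ) + (n : ℤ) - ((2 * n + 1 - e : ℕ) : ℤ) + 1)
        (2 * n - e)
      - xsj ι n (s + (PABC ι n (2 * n + 1 - e) : ℤ) + (n : ℤ) - ((2 * n + 1 - e : ℕ) : ℤ) + 1)
          (2 * n + 1 - e)

/-- The box of type C (`ovl(n+1)` encoded as `0`). -/
def boxC (ι : ℕ → ℕ) (n : ℕ) (s : ℤ) (e : ℕ) : ℕ → ℚ :=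
  if e = 0 then xsj ι n (s + (PABC ι n n : ℤ)) n
  else if e < n then
    xsj ι n (s + (PABC ι n e : ℤ)) e - xsj ι n (s + (PABC ι n (e - 1) : ℤ) + 1) (e - 1)
  else if e = n then
    (2 : ℚ) • xsj ι n (s + (PABC ι n n : ℤ)) n
      - xsj ι n (s + (PABC ι n (n - 1) : ℤ) + 1) (n - 1)
  else if e = n + 1 then
    xsj ι n (s + (PABC ι n (n - 1) : ℤ) + 1) (n - 1)
      - (2 : ℚ) • xsj ι n (s + (PABC ι n n : ℤ) + 1) n
  else
    xsj ι n (s + (PABC ι n (2 * n - e) : ℤ) + (n : ℤ) - ((2 * n + 1 - e : ℕ) : ℤ) + 1)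
        (2 * n - e)
      - xsj ι n (s + (PABC ι n (2 * n + 1 - e) : ℤ) + (n : ℤ) - ((2 * n + 1 - e : ℕ) : ℤ) + 1)
          (2 * n + 1 - e)

/-- The box of type D (`ovl(n+1)` encoded as `0`, `n̄` as `n+1`, `ovl(n-1)` as `n+2`). -/
def boxD (ι : ℕ → ℕ) (n : ℕ) (s : ℤ) (e : ℕ) : ℕ → ℚ :=
  if e = 0 then xsj ι n (s + (PD ι n n : ℤ)) n
  else if e ≤ n - 2 then
    xsj ι n (s + (PD ι n e : ℤ)) e - xsj ι n (s + (PD ι n (e - 1) : ℤ) + 1) (e - 1)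
  else if e = n - 1 then
    xsj ι n (s + (PD ι n (n - 1) : ℤ)) (n - 1) + xsj ι n (s + (PD ι n n : ℤ)) n
      - xsj ι n (s + (PD ι n (n - 2) : ℤ) + 1) (n - 2)
  else if e = n then
    xsj ι n (s + (PD ι n n : ℤ)) n - xsj ι n (s + (PD ι n (n - 1) : ℤ) + 1) (n - 1)
  else if e = n + 1 then
    xsj ι n (s + (PD ι n (n - 1) : ℤ)) (n - 1) - xsj ι n (s + (PD ι n n : ℤ) + 1) n
  else if e = n + 2 then
    xsj ι n (s + (PD ι n (n - 2) : ℤ) + 1) (n - 2)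
      - xsj ι n (s + (PD ι n (n - 1) : ℤ) + 1) (n - 1)
      - xsj ι n (s + (PD ι n n : ℤ) + 1) n
  else
    xsj ι n (s + (PD ι n (2 * n - e) : ℤ) + (n : ℤ) - ((2 * n + 1 - e : ℕ) : ℤ)) (2 * n - e)
      - xsj ι n (s + (PD ι n (2 * n + 1 - e) : ℤ) + (n : ℤ) - ((2 * n + 1 - e : ℕ) : ℤ))
          (2 * n + 1 - e)

/-- The column tableau `[j_1,…,j_k]_s = Σ_{i=1}^k box_{s+k-i}(j_i)`. -/
def tab (box : ℤ → ℕ → ℕ → ℚ) (s : ℤ) (k : ℕ) (j : ℕ → ℕ) : ℕ → ℚ :=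
  ∑ i ∈ Finset.Icc 1 k, box (s + (k : ℤ) - (i : ℤ)) (j i)

/-- The set `Tab_{A,ι}`. -/
def TabA (ι : ℕ → ℕ) (n : ℕ) : Set (ℕ → ℚ) :=
  { T | ∃ (k : ℕ) (s : ℤ) (j : ℕ → ℕ),
      1 ≤ k ∧ k ≤ n ∧
      (∀ i, 1 ≤ i → i ≤ k → 1 ≤ j i ∧ j i ≤ n + 1) ∧
      (∀ i, 1 ≤ i → i < k → j i < j (i + 1)) ∧
      1 - (PABC ι n k : ℤ) ≤ s ∧
      T = tab (boxA ι n) s k j }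

/-- `|·|` on encoded entries of `J_B = J_C`. -/
def absJ (n e : ℕ) : ℕ := if e ≤ n then e else 2 * n + 1 - e

/-- The set `Tab_{B,ι}`. -/
def TabB (ι : ℕ → ℕ) (n : ℕ) : Set (ℕ → ℚ) :=
  { T | ∃ (k : ℕ) (s : ℤ) (j : ℕ → ℕ),
      1 ≤ k ∧ k ≤ n ∧
      (∀ i, 1 ≤ i → i ≤ k → 1 ≤ j i ∧ j i ≤ 2 * n) ∧
      (∀ i, 1 ≤ i → i < k → j i < j (i + 1)) ∧
      (k = n → ∀ l m, 1 ≤ l → l < m → m ≤ k → absJ n (j l) ≠ absJ n (j m)) ∧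
      1 - (PABC ι n k : ℤ) ≤ s ∧
      T = tab (boxB ι n) s k j }

/-- Defining conditions of `Tab_{C,ι}` on the data `(k,s,j)`. -/
def TabCcond (ι : ℕ → ℕ) (n : ℕ) (k : ℕ) (s : ℤ) (j : ℕ → ℕ) : Prop :=
  (1 ≤ k ∧ k ≤ n - 1 ∧
    (∀ i, 1 ≤ i → i ≤ k → 1 ≤ j i ∧ j i ≤ 2 * n) ∧
    (∀ i, 1 ≤ i → i < k → j i < j (i + 1)) ∧
    1 - (PABC ι n k : ℤ) ≤ s)
  ∨
  (j 1 = 0 ∧ 1 ≤ k ∧ k ≤ n + 1 ∧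
    (∀ i, 2 ≤ i → i ≤ k → n + 1 ≤ j i ∧ j i ≤ 2 * n) ∧
    (∀ i, 2 ≤ i → i < k → j i < j (i + 1)) ∧
    1 - (PABC ι n n : ℤ) ≤ s)

/-- The set `Tab_{C,ι}`. -/
def TabC (ι : ℕ → ℕ) (n : ℕ) : Set (ℕ → ℚ) :=
  { T | ∃ k s j, TabCcond ι n k s j ∧ T = tab (boxC ι n) s k j }

/-- The partial order on (encoded) `J_D`: `a ≤ b` iff `a = b`, or `a < b` numerically and
`(a,b)` is not the incomparable pair `(n, n̄)`. -/
def leD (n a b : ℕ) : Prop := a = b ∨ (a < b ∧ ¬(a = n ∧ b = n + 1))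

/-- Defining conditions of `Tab_{D,ι}` on the data `(k,s,j)`. -/
def TabDcond (ι : ℕ → ℕ) (n : ℕ) (k : ℕ) (s : ℤ) (j : ℕ → ℕ) : Prop :=
  (1 ≤ k ∧ k ≤ n - 2 ∧
    (∀ i, 1 ≤ i → i ≤ k → 1 ≤ j i ∧ j i ≤ 2 * n) ∧
    (∀ i, 1 ≤ i → i < k → ¬ leD n (j (i + 1)) (j i)) ∧
    1 - (PD ι n k : ℤ) ≤ s)
  ∨
  (j 1 = 0 ∧ 1 ≤ k ∧ k ≤ n + 1 ∧
    (∀ i, 2 ≤ i → i ≤ k → n + 1 ≤ j i ∧ j i ≤ 2 * n) ∧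
    (∀ i, 2 ≤ i → i < k → j i < j (i + 1)) ∧
    (k % 2 = 0 → 1 - (PD ι n (n - 1) : ℤ) ≤ s) ∧
    (k % 2 = 1 → 1 - (PD ι n n : ℤ) ≤ s))

/-- The set `Tab_{D,ι}`. -/
def TabD (ι : ℕ → ℕ) (n : ℕ) : Set (ℕ → ℚ) :=
  { T | ∃ k s j, TabDcond ι n k s j ∧ T = tab (boxD ι n) s k j }

end

/-! In types B and C the boxes are the same differences of coordinates, except that type C doubles
`x_{s,n}`; weights `d` treat both types at once. If `ι` is adapted, then between two consecutive
occurrences of `t` each neighbour `t ± 1` occurs exactly once, and which occurrence it is depends on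
`p_{t±1,t}`. The shifts `P` record this, so `β_{M',t}` is the box of `t` minus the box of `t + 1`
in row `i`. Subtracting it from a tableau therefore replaces the entry `t` of that row by `t + 1`.

For the coefficient itself, `x_{M',t}` can only come from an entry `t`, `t + 1`, `ovl(t+1)`
or `ovl(t)`, in row `i`, `i + 1`, `i + n - t` or `i + n - t + 1` respectively. -/

section Occurrences

open Filter Finset

variable {ι : ℕ → ℕ} {u v : ℕ}

theorem occPos_succ_mem (hu : ∃ᶠ l in atTop, ι l = u) (m : ℕ) :
    occPos ι u m < occPos ι u (m + 1) ∧ ι (occPos ι u (m + 1)) = u :=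
  Nat.sInf_mem (s := {l | occPos ι u m < l ∧ ι l = u}) (frequently_atTop'.1 hu (occPos ι u m))

theorem occPos_succ_le {m l : ℕ} (hml : occPos ι u m < l) (hl : ι l = u) :
    occPos ι u (m + 1) ≤ l :=
  Nat.sInf_le (s := {l | occPos ι u m < l ∧ ι l = u}) ⟨hml, hl⟩

theorem occPos_strictMono (hu : ∃ᶠ l in atTop, ι l = u) : StrictMono (occPos ι u) :=
  strictMono_nat_of_lt_succ fun m => (occPos_succ_mem hu m).1

theorem apply_occPos (hu : ∃ᶠ l in atTop, ι l = u) {m : ℕ} (hm : 1 ≤ m) :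
    ι (occPos ι u m) = u := by
  obtain ⟨m, rfl⟩ := Nat.exists_eq_add_of_le' hm
  exact (occPos_succ_mem hu m).2

theorem occPos_pos (hu : ∃ᶠ l in atTop, ι l = u) {m : ℕ} (hm : 1 ≤ m) : 0 < occPos ι u m :=
  occPos_strictMono hu hm

theorem occPos_eq_occPos_iff (hu : ∃ᶠ l in atTop, ι l = u) (hv : ∃ᶠ l in atTop, ι l = v)
    {m q : ℕ} (hm : 1 ≤ m) (hq : 1 ≤ q) : occPos ι u m = occPos ι v q ↔ u = v ∧ m = q := by
  refine ⟨fun h => ?_, fun ⟨huv, hmq⟩ => by rw [huv, hmq]⟩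
  obtain rfl : u = v := by rw [← apply_occPos hu hm, h, apply_occPos hv hq]
  exact ⟨rfl, (occPos_strictMono hu).injective h⟩

theorem kplus_occPos (hu : ∃ᶠ l in atTop, ι l = u) {m : ℕ} (hm : 1 ≤ m) :
    kplus ι (occPos ι u m) = occPos ι u (m + 1) := by
  rw [kplus, apply_occPos hu hm, occPos]

theorem pval_add_pval (hu : ∃ᶠ l in atTop, ι l = u) (hv : ∃ᶠ l in atTop, ι l = v)
    (huv : u ≠ v) : pval ι u v + pval ι v u = 1 := by
  have hne : firstOcc ι u ≠ firstOcc ι v := fun h =>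
    huv ((occPos_eq_occPos_iff hu hv le_rfl le_rfl).1 h).1
  unfold pval
  split_ifs <;> omega

/-- The occurrences of the letters `u` and `v` in `ι` alternate; adaptedness of `ι` to `A` is this
condition for all pairs of distinct letters with `a_{u,v} ≠ 0`. -/
def Alternating (ι : ℕ → ℕ) (u v : ℕ) : Prop :=
  ∀ k l, 1 ≤ k → k < l → (ι k = u ∨ ι k = v) → (ι l = u ∨ ι l = v) →
    (∀ m, k < m → m < l → ι m ≠ u ∧ ι m ≠ v) → ι k ≠ ι l

theorem Alternating.symm (h : Alternating ι u v) : Alternating ι v u :=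
  fun k l hk hkl hik hil hmid =>
    h k l hk hkl hik.symm hil.symm fun m hkm hml => (hmid m hkm hml).symm

theorem Alternating.exists_between (h : Alternating ι u v) (hu : ∃ᶠ l in atTop, ι l = u)
    {m : ℕ} (hm : 1 ≤ m) : ∃ l, occPos ι u m < l ∧ l < occPos ι u (m + 1) ∧ ι l = v := by
  by_contra! hv
  obtain ⟨hlt, hletter⟩ := occPos_succ_mem hu m
  refine h _ _ (occPos_pos hu hm) hlt (.inl (apply_occPos hu hm)) (.inl hletter)
    (fun l hml hlm => ⟨fun hl => ?_, hv l hml hlm⟩) ((apply_occPos hu hm).trans hletter.symm)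
  exact hlm.not_ge (occPos_succ_le hml hl)

theorem Alternating.occPos_interlace (h : Alternating ι u v) (hu : ∃ᶠ l in atTop, ι l = u)
    (hv : ∃ᶠ l in atTop, ι l = v) (hfirst : occPos ι u 1 < occPos ι v 1) (m : ℕ) :
    occPos ι v m < occPos ι u (m + 1) ∧ occPos ι u (m + 1) < occPos ι v (m + 1) := by
  induction m with
  | zero => exact ⟨occPos_pos hu le_rfl, hfirst⟩
  | succ m ih =>
    obtain ⟨l, hul, hlu, hl⟩ := h.exists_between hu (Nat.le_add_left 1 m)
    have hvu : occPos ι v (m + 1) < occPos ι u (m + 2) :=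
      (occPos_succ_le (ih.1.trans hul) hl).trans_lt hlu
    obtain ⟨l', hvl, hlv, hl'⟩ := h.symm.exists_between hv (Nat.le_add_left 1 m)
    exact ⟨hvu, (occPos_succ_le (ih.2.trans hvl) hl').trans_lt hlv⟩

theorem filter_Ioo_eq_singleton_occPos (hv : ∃ᶠ l in atTop, ι l = v) {q a b : ℕ}
    (hqa : occPos ι v q ≤ a) (haq : a < occPos ι v (q + 1)) (hqb : occPos ι v (q + 1) < b)
    (hbq : b ≤ occPos ι v (q + 2)) : {l ∈ Ioo a b | ι l = v} = {occPos ι v (q + 1)} := by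
  ext l
  simp only [mem_filter, mem_Ioo, mem_singleton]
  constructor
  · rintro ⟨⟨hal, hlb⟩, hl⟩
    refine (occPos_succ_le (hqa.trans_lt hal) hl).antisymm' (not_lt.1 fun hql => ?_)
    exact (hlb.trans_le hbq).not_ge (occPos_succ_le hql hl)
  · rintro rfl
    exact ⟨⟨haq, hqb⟩, (occPos_succ_mem hv q).2⟩

theorem Alternating.filter_Ioo_occPos (h : Alternating ι u v) (hu : ∃ᶠ l in atTop, ι l = u)
    (hv : ∃ᶠ l in atTop, ι l = v) (huv : u ≠ v) {m : ℕ} (hm : 1 ≤ m) :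
    {l ∈ Ioo (occPos ι u m) (occPos ι u (m + 1)) | ι l = v} =
      {occPos ι v (m + pval ι v u)} := by
  obtain ⟨m, rfl⟩ := Nat.exists_eq_add_of_le' hm
  have hne : occPos ι u 1 ≠ occPos ι v 1 := fun he =>
    huv ((occPos_eq_occPos_iff hu hv le_rfl le_rfl).1 he).1
  rcases hne.lt_or_gt with hlt | hgt
  · have hlace := h.occPos_interlace hu hv hlt
    rw [show pval ι v u = 0 from if_neg hlt.not_gt]
    exact filter_Ioo_eq_singleton_occPos hv (hlace m).1.le (hlace m).2 (hlace (m + 1)).1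
      (hlace (m + 1)).2.le
  · have hlace := h.symm.occPos_interlace hv hu hgt
    rw [show pval ι v u = 1 from if_pos hgt]
    exact filter_Ioo_eq_singleton_occPos hv (hlace m).2.le (hlace (m + 1)).1 (hlace (m + 1)).2
      (hlace (m + 2)).1.le

end Occurrences

section ShiftFunction

variable {ι : ℕ → ℕ} {n i k t : ℕ}

theorem PABC_succ (ht : 1 ≤ t) (htn : t < n) :
    PABC ι n (t + 1) = PABC ι n t + pval ι (t + 1) t := by
  rw [PABC, PABC, if_pos (Nat.succ_le_of_lt htn), if_pos htn.le, Finset.sum_Icc_succ_top (by omega),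
    Nat.add_sub_cancel]

theorem PABC_le_PABC (hi : 1 ≤ i) (hit : i ≤ t) (htn : t ≤ n) : PABC ι n i ≤ PABC ι n t := by
  induction t, hit using Nat.le_induction with
  | base => rfl
  | succ t hit ih =>
    rw [PABC_succ (hi.trans hit) htn]
    exact (ih (by omega)).trans (Nat.le_add_right _ _)

theorem PABC_le_PABC_add_sub (hi : 1 ≤ i) (hik : i ≤ k) (hkn : k ≤ n) :
    PABC ι n k ≤ PABC ι n i + (k - i) := by
  induction k, hik using Nat.le_induction with
  | base => simp
  | succ k hik ih =>
    have hp : pval ι (k + 1) k ≤ 1 := by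
      unfold pval
      split_ifs <;> omega
    have hk := ih (by omega)
    rw [PABC_succ (hi.trans hik) hkn]
    omega

end ShiftFunction

section BetaForm

open Finset

variable {n : ℕ} {ι : ℕ → ℕ} {t : ℕ}

theorem Admissible.frequently_eq (hadm : Admissible n ι) (ht : 1 ≤ t) (htn : t ≤ n) :
    ∃ᶠ l in Filter.atTop, ι l = t :=
  Filter.frequently_atTop.2 (hadm.2.2 t ht htn)

theorem xsj_zero_right (s : ℤ) : xsj ι n s 0 = 0 :=
  if_neg fun h => absurd h.2.1 (by omega)

theorem xsj_natCast {m : ℕ} (hm : 1 ≤ m) (ht : 1 ≤ t) (htn : t ≤ n) :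
    xsj ι n m t = xc (occPos ι t m) := by
  rw [xsj, if_pos ⟨mod_cast hm, ht, htn⟩, Int.toNat_natCast]

theorem xsj_apply_occPos (hadm : Admissible n ι) (ht : 1 ≤ t) (htn : t ≤ n) {M : ℤ}
    (hM : 1 ≤ M) (s : ℤ) (u : ℕ) :
    xsj ι n s u (occPos ι t M.toNat) = if u = t ∧ s = M then 1 else 0 := by
  by_cases h : 1 ≤ s ∧ 1 ≤ u ∧ u ≤ n
  · have hocc := occPos_eq_occPos_iff (hadm.frequently_eq ht htn)
      (hadm.frequently_eq h.2.1 h.2.2) (m := M.toNat) (q := s.toNat) (by omega) (by omega)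
    rw [xsj, if_pos h, xc]
    exact if_congr (hocc.trans (by omega)) rfl rfl
  · rw [xsj, if_neg h, if_neg (by omega), Pi.zero_apply]

theorem beta_occPos {A : ℕ → ℕ → ℤ} (hadm : Admissible n ι) (hA : Adapted n A ι)
    (ht : 1 ≤ t) (htn : t ≤ n) {m : ℕ} (hm : 1 ≤ m) :
    beta A ι (occPos ι t m) =
      xsj ι n m t + ∑ v ∈ (Icc 1 n).erase t, (A t v : ℚ) • xsj ι n ↑(m + pval ι v t) v
        + xsj ι n ↑(m + 1) t := by
  have hft := hadm.frequently_eq ht htn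
  have hmaps : ∀ l ∈ Ioo (occPos ι t m) (occPos ι t (m + 1)), ι l ∈ (Icc 1 n).erase t := by
    intro l hl
    rw [mem_Ioo] at hl
    exact mem_erase.2 ⟨fun hlt => hl.2.not_ge (occPos_succ_le hl.1 hlt),
      mem_Icc.2 (hadm.1 l (by omega))⟩
  rw [beta, if_neg (occPos_pos hft hm).ne', kplus_occPos hft hm, apply_occPos hft hm,
    xsj_natCast hm ht htn, xsj_natCast (Nat.le_add_left 1 m) ht htn,
    ← sum_fiberwise_of_maps_to hmaps]
  congr 2
  refine sum_congr rfl fun v hv => ?_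
  obtain ⟨hvt, hvn⟩ := mem_erase.1 hv
  rw [mem_Icc] at hvn
  have hfv := hadm.frequently_eq hvn.1 hvn.2
  by_cases hAv : A t v = 0
  · rw [hAv, Int.cast_zero, zero_smul]
    exact sum_eq_zero fun l hl => by rw [(mem_filter.1 hl).2, hAv, Int.cast_zero, zero_smul]
  · have halt : Alternating ι t v := hA t v ht htn hvn.1 hvn.2 hvt.symm hAv
    rw [halt.filter_Ioo_occPos hft hfv hvt.symm hm, sum_singleton, apply_occPos hfv (by omega),
      xsj_natCast (by omega) hvn.1 hvn.2]

end BetaForm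

section WeightedBoxes

variable {n : ℕ} {ι : ℕ → ℕ} {d : ℕ → ℤ} {t : ℕ}

/-- The coordinate form `d_j x_{s,j}`. -/
noncomputable def weightedX (ι : ℕ → ℕ) (n : ℕ) (d : ℕ → ℤ) (s : ℤ) (j : ℕ) : ℕ → ℚ :=
  (d j : ℚ) • xsj ι n s j

/-- The box of the unbarred entry `j`, with every `x_{s,u}` replaced by `d_u x_{s,u}`. -/
noncomputable def unbarredBox (ι : ℕ → ℕ) (n : ℕ) (d : ℕ → ℤ) (s : ℤ) (j : ℕ) : ℕ → ℚ :=
  weightedX ι n d (s + PABC ι n j) j - weightedX ι n d (s + PABC ι n (j - 1) + 1) (j - 1)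

/-- The box of the barred entry `j̄`, with every `x_{s,u}` replaced by `d_u x_{s,u}`. -/
noncomputable def barredBox (ι : ℕ → ℕ) (n : ℕ) (d : ℕ → ℤ) (s : ℤ) (j : ℕ) : ℕ → ℚ :=
  weightedX ι n d (s + PABC ι n (j - 1) + n - j + 1) (j - 1)
    - weightedX ι n d (s + PABC ι n j + n - j + 1) j

/-- The common form of the boxes of types B and C, with `j̄` encoded as `2n+1-j`: type B is the
case `d = 1`, and type C, away from the entry `ovl(n+1)`, is the case where `d_n = 2` and all other
weights are `1`. -/
noncomputable def weightedBox (ι : ℕ → ℕ) (n : ℕ) (d : ℕ → ℤ) (s : ℤ) (e : ℕ) : ℕ → ℚ :=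
  if e ≤ n then unbarredBox ι n d s e else barredBox ι n d s (2 * n + 1 - e)

theorem weightedX_apply_occPos (hadm : Admissible n ι) (ht : 1 ≤ t) (htn : t ≤ n) (hd : d t = 1)
    {M : ℤ} (hM : 1 ≤ M) (s : ℤ) (u : ℕ) :
    weightedX ι n d s u (occPos ι t M.toNat) = if u = t ∧ s = M then 1 else 0 := by
  rw [weightedX, Pi.smul_apply, xsj_apply_occPos hadm ht htn hM]
  by_cases hu : u = t
  · simp [hu, hd]
  · simp [hu]

theorem weightedBox_apply_occPos (hadm : Admissible n ι) (ht : 1 ≤ t) (htn : t < n)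
    (hd : d t = 1) {M : ℤ} (hM : 1 ≤ M) (s : ℤ) (e : ℕ) :
    weightedBox ι n d s e (occPos ι t M.toNat) =
      (if e = t ∧ s + PABC ι n t = M then 1 else 0)
      - (if e = t + 1 ∧ s + PABC ι n t + 1 = M then 1 else 0)
      + (if e = 2 * n - t ∧ s + PABC ι n t + (n - t : ℕ) = M then 1 else 0)
      - (if e = 2 * n + 1 - t ∧ s + PABC ι n t + (n - t : ℕ) + 1 = M then 1 else 0) := by
  have hx := weightedX_apply_occPos hadm ht htn.le hd hM
  by_cases he : e ≤ n
  · rw [weightedBox, if_pos he, unbarredBox, Pi.sub_apply, hx, hx,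
      if_neg (c := e = 2 * n - t ∧ _) (by omega),
      if_neg (c := e = 2 * n + 1 - t ∧ _) (by omega), add_zero, sub_zero]
    have hpred : e - 1 = t ↔ e = t + 1 := by omega
    congr 1
    · exact if_congr (and_congr_right fun h => by rw [h]) rfl rfl
    · exact if_congr ((and_congr_right fun h => by rw [h]).trans (and_congr_left' hpred)) rfl rfl
  · rw [weightedBox, if_neg he, barredBox, Pi.sub_apply, hx, hx,
      if_neg (c := e = t ∧ _) (by omega), if_neg (c := e = t + 1 ∧ _) (by omega),
      sub_zero, zero_add]
    have hsucc : 2 * n + 1 - e - 1 = t ↔ e = 2 * n - t := by omega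
    have hself : 2 * n + 1 - e = t ↔ e = 2 * n + 1 - t := by omega
    congr 1
    · exact if_congr ((and_congr_right fun h => by rw [h]; omega).trans
        (and_congr_left' hsucc)) rfl rfl
    · exact if_congr ((and_congr_right fun h => by rw [h]; omega).trans
        (and_congr_left' hself)) rfl rfl

theorem sum_erase_smul_eq_neighbours {V : Type*} [AddCommGroup V] [Module ℚ V] {a : ℕ → ℤ}
    {f : ℕ → V} (hf : f 0 = 0) (ht : 1 ≤ t) (htn : t < n)
    (ha : ∀ v, v ≠ t → a v = if v = t + 1 ∨ v + 1 = t then -d v else 0) :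
    ∑ v ∈ (Finset.Icc 1 n).erase t, (a v : ℚ) • f v =
      -((d (t - 1) : ℚ) • f (t - 1)) - (d (t + 1) : ℚ) • f (t + 1) := by
  have hmem : ∀ v, v ∉ (Finset.Icc 1 n).erase t → v = t ∨ v = 0 ∨ n < v := by
    intro v hv
    rw [Finset.mem_erase, Finset.mem_Icc] at hv
    omega
  rw [Finset.sum_eq_add (t - 1) (t + 1) (by omega)]
  · have hbelow : (a (t - 1) : ℚ) • f (t - 1) = -((d (t - 1) : ℚ) • f (t - 1)) := by
      rw [ha (t - 1) (by omega), if_pos (by omega), Int.cast_neg, neg_smul]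
    rw [hbelow, ha (t + 1) (by omega), if_pos (by omega), Int.cast_neg, neg_smul, sub_eq_add_neg]
  · intro v hv hne
    rw [ha v (Finset.ne_of_mem_erase hv), if_neg (by omega), Int.cast_zero, zero_smul]
  · intro hv
    have h0 : t - 1 = 0 := by have := hmem _ hv; omega
    rw [h0, hf, smul_zero]
  · intro hv
    have := hmem _ hv
    omega

theorem weightedX_pred_shift (hadm : Admissible n ι) (ht : 1 ≤ t) (htn : t ≤ n) (s : ℤ) :
    weightedX ι n d (s + PABC ι n (t - 1) + 1) (t - 1) =
      weightedX ι n d (s + PABC ι n t + pval ι (t - 1) t) (t - 1) := by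
  rcases ht.eq_or_lt with rfl | ht'
  · simp [weightedX, xsj_zero_right]
  · have hP := PABC_succ (ι := ι) (n := n) (t := t - 1) (by omega) (by omega)
    have hp := pval_add_pval (hadm.frequently_eq ht htn)
      (hadm.frequently_eq (t := t - 1) (by omega) (by omega)) (by omega)
    rw [Nat.sub_add_cancel ht] at hP
    congr 1
    omega

theorem beta_occPos_eq_unbarredBox_sub {A : ℕ → ℕ → ℤ} (hadm : Admissible n ι)
    (hA : Adapted n A ι) (ht : 1 ≤ t) (htn : t < n) (hd : d t = 1)
    (hrow : ∀ v, v ≠ t → A t v = if v = t + 1 ∨ v + 1 = t then -d v else 0)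
    {s : ℤ} (hs : 1 ≤ s + PABC ι n t) :
    beta A ι (occPos ι t (s + PABC ι n t).toNat) =
      unbarredBox ι n d s t - unbarredBox ι n d s (t + 1) := by
  have hpred := weightedX_pred_shift (d := d) hadm ht htn.le s
  have hsucc : s + PABC ι n (t + 1) = s + PABC ι n t + pval ι (t + 1) t := by
    rw [PABC_succ ht htn]
    push_cast
    ring
  rw [unbarredBox, unbarredBox, Nat.add_sub_cancel, hpred, hsucc]
  obtain ⟨m, hm⟩ := Int.eq_ofNat_of_zero_le (zero_le_one.trans hs)
  have hsum := sum_erase_smul_eq_neighbours (f := fun v => xsj ι n ↑(m + pval ι v t) v)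
    (xsj_zero_right _) ht htn hrow
  rw [hm, Int.toNat_natCast, beta_occPos hadm hA ht htn.le (by omega), hsum]
  simp only [weightedX, hd]
  push_cast
  module

theorem boxB_eq_weightedBox : boxB ι n = weightedBox ι n 1 := by
  funext s e
  have hpred : 2 * n + 1 - e - 1 = 2 * n - e := by omega
  simp [boxB, weightedBox, unbarredBox, barredBox, weightedX, hpred]

theorem boxC_eq_weightedBox (hn : 1 ≤ n) {e : ℕ} (he : 1 ≤ e) (s : ℤ) :
    boxC ι n s e = weightedBox ι n (Function.update 1 n 2) s e := by
  have hd : ∀ s j, j ≠ n → weightedX ι n (Function.update 1 n 2) s j = xsj ι n s j :=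
    fun s j hj => by simp [weightedX, hj]
  have hdn : ∀ s, weightedX ι n (Function.update 1 n 2) s n = (2 : ℚ) • xsj ι n s n := by
    simp [weightedX]
  have hpred : 2 * n + 1 - e - 1 = 2 * n - e := by omega
  rw [boxC, if_neg (by omega), weightedBox, unbarredBox, barredBox, hpred]
  rcases lt_trichotomy e n with hen | rfl | hen
  · rw [if_pos hen, if_pos hen.le, hd _ _ hen.ne, hd _ _ (by omega)]
  · rw [if_neg (lt_irrefl _), if_pos rfl, if_pos le_rfl, hdn, hd _ _ (by omega)]
  · rw [if_neg hen.not_gt, if_neg hen.ne', if_neg hen.not_ge, hd _ (2 * n - e) (by omega)]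
    rcases eq_or_ne e (n + 1) with rfl | hne
    · have hlast : 2 * n + 1 - (n + 1) = n := by omega
      have hprev : 2 * n - (n + 1) = n - 1 := by omega
      simp only [hlast, hprev, hdn, if_true, add_sub_cancel_right]
    · rw [if_neg hne, hd _ _ (by omega)]

theorem cartanB_of_ne {v : ℕ} (htn : t < n) (hv : v ≠ t) :
    cartanB n t v = if v = t + 1 ∨ v + 1 = t then -(1 : ℕ → ℤ) v else 0 := by
  unfold cartanB
  split_ifs <;> first | rfl | omega

theorem cartanC_of_ne {v : ℕ} (htn : t < n) (hv : v ≠ t) :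
    cartanC n t v =
      if v = t + 1 ∨ v + 1 = t then -Function.update (1 : ℕ → ℤ) n 2 v else 0 := by
  unfold cartanC
  rcases eq_or_ne v n with rfl | hvn
  · rw [Function.update_self]
    split_ifs <;> omega
  · rw [Function.update_of_ne hvn, Pi.one_apply]
    split_ifs <;> omega

end WeightedBoxes

section Tableaux

variable {n k i t : ℕ} {ι : ℕ → ℕ} {d : ℕ → ℤ} {s : ℤ} {jf : ℕ → ℕ}

theorem tab_update (box : ℤ → ℕ → ℕ → ℚ) (hi : 1 ≤ i) (hik : i ≤ k) (e : ℕ) :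
    tab box s k (Function.update jf i e) =
      tab box s k jf - (box (s + k - i) (jf i) - box (s + k - i) e) := by
  have hmem : i ∈ Finset.Icc 1 k := Finset.mem_Icc.2 ⟨hi, hik⟩
  have hrest : ∀ l ∈ (Finset.Icc 1 k).erase i,
      box (s + k - l) (Function.update jf i e l) = box (s + k - l) (jf l) := fun l hl => by
    rw [Function.update_of_ne (Finset.ne_of_mem_erase hl)]
  rw [tab, tab, ← Finset.add_sum_erase _ _ hmem, ← Finset.add_sum_erase _ _ hmem,
    Finset.sum_congr rfl hrest, Function.update_self]
  abel

theorem one_le_update_apply (hpos : ∀ l, 1 ≤ l → l ≤ k → 1 ≤ jf l) {e : ℕ} (he : 1 ≤ e) (l : ℕ)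
    (hl : 1 ≤ l) (hlk : l ≤ k) : 1 ≤ Function.update jf i e l := by
  rcases eq_or_ne l i with rfl | hli
  · rwa [Function.update_self]
  · rw [Function.update_of_ne hli]
    exact hpos l hl hlk

theorem tab_boxC_eq_weightedBox (hn : 1 ≤ n) (hpos : ∀ l, 1 ≤ l → l ≤ k → 1 ≤ jf l) :
    tab (boxC ι n) s k jf = tab (weightedBox ι n (Function.update 1 n 2)) s k jf :=
  Finset.sum_congr rfl fun l hl =>
    boxC_eq_weightedBox hn (hpos l (Finset.mem_Icc.1 hl).1 (Finset.mem_Icc.1 hl).2) _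

theorem sum_Icc_ite_and_eq (p : ℕ → Prop) [DecidablePred p] {k a : ℕ} (ha : 1 ≤ a) :
    ∑ l ∈ Finset.Icc 1 k, (if p l ∧ l = a then (1 : ℚ) else 0) =
      if a ≤ k ∧ p a then 1 else 0 := by
  simp only [and_comm (a := p _), ite_and, Finset.sum_ite_eq', Finset.mem_Icc, ha, true_and]

theorem tab_weightedBox_apply_occPos (hadm : Admissible n ι) (ht : 1 ≤ t) (htn : t < n)
    (hd : d t = 1) (hi : 1 ≤ i) {M : ℤ} (hM : 1 ≤ M) (hMi : M = s + k - i + PABC ι n t) :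
    tab (weightedBox ι n d) s k jf (occPos ι t M.toNat) =
      (if i ≤ k ∧ jf i = t then 1 else 0)
      - (if i + 1 ≤ k ∧ jf (i + 1) = t + 1 then 1 else 0)
      + (if i + (n - t) ≤ k ∧ jf (i + (n - t)) = 2 * n - t then 1 else 0)
      - (if i + (n - t) + 1 ≤ k ∧ jf (i + (n - t) + 1) = 2 * n + 1 - t then 1 else 0) := by
  have hshift : ∀ r l : ℕ, s + k - l + PABC ι n t + r = M ↔ l = i + r := by omega
  have hshift₀ : ∀ l : ℕ, s + k - l + PABC ι n t = M ↔ l = i := by omega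
  have hshift₁ : ∀ l : ℕ, s + k - l + PABC ι n t + 1 = M ↔ l = i + 1 := by omega
  have hshift₂ : ∀ l : ℕ, s + k - l + PABC ι n t + (n - t : ℕ) + 1 = M ↔ l = i + (n - t) + 1 := by
    omega
  simp only [tab, Finset.sum_apply, weightedBox_apply_occPos hadm ht htn hd hM, hshift₀, hshift₁,
    hshift₂, hshift, Finset.sum_sub_distrib, Finset.sum_add_distrib]
  rw [sum_Icc_ite_and_eq _ hi, sum_Icc_ite_and_eq _ (Nat.le_add_left 1 i),
    sum_Icc_ite_and_eq _ (by omega), sum_Icc_ite_and_eq _ (by omega)]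

theorem le_apply_of_lt_succ (hpos : ∀ l, 1 ≤ l → l ≤ k → 1 ≤ jf l)
    (hlt : ∀ l, 1 ≤ l → l < k → jf l < jf (l + 1)) (hi : 1 ≤ i) (hik : i ≤ k) : i ≤ jf i := by
  induction i, hi using Nat.le_induction with
  | base => exact hpos 1 le_rfl hik
  | succ i hi ih => exact (ih (by omega)).trans_lt (hlt i hi hik)

theorem one_le_add_PABC (hi : 1 ≤ i) (hik : i ≤ k) (hkn : k ≤ n) (hit : i ≤ t) (htn : t ≤ n)
    (hs : 1 - (PABC ι n k : ℤ) ≤ s) : 1 ≤ s + k - i + PABC ι n t := by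
  have hki := PABC_le_PABC_add_sub (ι := ι) hi hik hkn
  have hit := PABC_le_PABC (ι := ι) hi hit htn
  omega

theorem Sop_of_apply_eq_one {A : ℕ → ℕ → ℤ} {φ : ℕ → ℚ} {l : ℕ} (h : φ l = 1) :
    Sop A ι l φ = φ - beta A ι l := by
  rw [Sop, h, if_pos one_pos, one_smul]

theorem Ssj_tab_weightedBox {A : ℕ → ℕ → ℤ} (hadm : Admissible n ι)
    (hA : Adapted n A ι) (ht : 1 ≤ t) (htn : t < n) (hd : d t = 1)
    (hrow : ∀ v, v ≠ t → A t v = if v = t + 1 ∨ v + 1 = t then -d v else 0)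
    (hi : 1 ≤ i) (hik : i ≤ k) (hjt : jf i = t) {M : ℤ} (hM : 1 ≤ M)
    (hMi : M = s + k - i + PABC ι n t)
    (hone : tab (weightedBox ι n d) s k jf (occPos ι t M.toNat) = 1) :
    Ssj A ι M.toNat t (tab (weightedBox ι n d) s k jf) =
      tab (weightedBox ι n d) s k (Function.update jf i (t + 1)) := by
  subst hMi
  rw [Ssj, Sop_of_apply_eq_one hone, beta_occPos_eq_unbarredBox_sub hadm hA ht htn hd hrow hM,
    tab_update _ hi hik, hjt, weightedBox, if_pos htn.le, weightedBox,
    if_pos (Nat.succ_le_of_lt htn)]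

theorem TabCcond.of_unbarred (hT : TabCcond ι n k s jf) (hi : 1 ≤ i) (hik : i ≤ k)
    (hpos : 1 ≤ jf i) (hn : jf i ≤ n) :
    k ≤ n - 1 ∧ (∀ l, 1 ≤ l → l ≤ k → 1 ≤ jf l ∧ jf l ≤ 2 * n) ∧
      (∀ l, 1 ≤ l → l < k → jf l < jf (l + 1)) ∧ 1 - (PABC ι n k : ℤ) ≤ s := by
  rcases hT with ⟨-, hT⟩ | ⟨h0, -, -, hbar, -, -⟩
  · exact hT
  · rcases hi.eq_or_lt with rfl | hi
    · omega
    · exact absurd (hbar i hi hik).1 (by omega)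

theorem coeff_trichotomy (p q : Prop) [Decidable p] [Decidable q] {c : ℚ}
    (hc : c = 1 + (if p then 1 else 0) - (if q then 1 else 0)) :
    (c = 0 ∨ c = 1 ∨ c = 2) ∧ (c = 0 ↔ q ∧ ¬p) ∧ (c = 2 ↔ ¬q ∧ p) := by
  subst hc
  by_cases hp : p <;> by_cases hq : q <;> norm_num [hp, hq]

end Tableaux

theorem coeff_unbarred_BC_general {n : ℕ} {ι : ℕ → ℕ} (hadm : Admissible n ι)
    {A : ℕ → ℕ → ℤ} (hA : Adapted n A ι) {d : ℕ → ℤ} {t : ℕ} (ht : 1 ≤ t) (htn : t < n)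
    (hd : d t = 1)
    (hrow : ∀ v, v ≠ t → A t v = if v = t + 1 ∨ v + 1 = t then -d v else 0)
    {k : ℕ} {s : ℤ} {jf : ℕ → ℕ} {i : ℕ} (hi : 1 ≤ i) (hik : i ≤ k) (hjt : jf i = t)
    (hjn : i < k → jf (i + 1) ≠ t + 1)
    {M : ℤ} (hMi : M = s + k - i + PABC ι n t) (hM : 1 ≤ M)
    {c : ℚ} (hc : c = tab (weightedBox ι n d) s k jf (occPos ι t M.toNat)) :
    (c = 0 ∨ c = 1 ∨ c = 2) ∧
      (c = 0 ↔
        ((i + (n - t) + 1 ≤ k ∧ jf (i + (n - t) + 1) = 2 * n + 1 - t) ∧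
          ¬(i + (n - t) ≤ k ∧ jf (i + (n - t)) = 2 * n - t))) ∧
      (c = 2 ↔
        (¬(i + (n - t) + 1 ≤ k ∧ jf (i + (n - t) + 1) = 2 * n + 1 - t) ∧
          (i + (n - t) ≤ k ∧ jf (i + (n - t)) = 2 * n - t))) ∧
      (c = 1 → Ssj A ι M.toNat t (tab (weightedBox ι n d) s k jf) =
        tab (weightedBox ι n d) s k (Function.update jf i (t + 1))) := by
  have hcoeff := hc.trans (tab_weightedBox_apply_occPos hadm ht htn hd hi hM hMi)
  rw [if_pos ⟨hik, hjt⟩, if_neg fun h => hjn h.1 h.2, sub_zero] at hcoeff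
  obtain ⟨hrange, hzero, htwo⟩ := coeff_trichotomy _ _ hcoeff
  exact ⟨hrange, hzero, htwo, fun hone =>
    Ssj_tab_weightedBox hadm hA ht htn hd hrow hi hik hjt hM hMi (hc.symm.trans hone)⟩

/-- Lemma 5.2 (types B and C): behaviour of the coefficient of `x_{M',t}` in a tableau
`T = [j_1,…,j_k]^X_s` having an entry `j_i = t` with `j_{i+1} ≠ t+1`, where
`M' = s+k-i+P(t)`.  Barred entries `ovl(t)`, `ovl(t+1)` are encoded as `2n+1-t`, `2n-t`.
Out-of-range conditions `j_l = t` are regarded as violated.  The coefficient of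
`x_{M',t}` in `T` is the value of `T` at the position of the `M'`-th occurrence of `t`. -/
theorem coeff_unbarred_BC (n : ℕ) (hn : 2 ≤ n) (ι : ℕ → ℕ) (hadm : Admissible n ι) :
    (Adapted n (cartanB n) ι →
      ∀ (k : ℕ) (s : ℤ) (jf : ℕ → ℕ),
        1 ≤ k → k ≤ n →
        (∀ i, 1 ≤ i → i ≤ k → 1 ≤ jf i ∧ jf i ≤ 2 * n) →
        (∀ i, 1 ≤ i → i < k → jf i < jf (i + 1)) →
        (k = n → ∀ l m, 1 ≤ l → l < m → m ≤ k → absJ n (jf l) ≠ absJ n (jf m)) →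
        1 - (PABC ι n k : ℤ) ≤ s →
        ∀ t, 1 ≤ t → t ≤ n - 1 →
        ∀ i, 1 ≤ i → i ≤ k → jf i = t → (i < k → jf (i + 1) ≠ t + 1) →
        ∀ M' : ℤ, M' = s + (k : ℤ) - (i : ℤ) + (PABC ι n t : ℤ) →
        ∀ c : ℚ, c = tab (boxB ι n) s k jf (occPos ι t M'.toNat) →
          1 ≤ M' ∧
          (c = 0 ∨ c = 1 ∨ c = 2) ∧
          (c = 0 ↔
            ((i + (n - t) + 1 ≤ k ∧ jf (i + (n - t) + 1) = 2 * n + 1 - t) ∧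
             ¬(i + (n - t) ≤ k ∧ jf (i + (n - t)) = 2 * n - t))) ∧
          (c = 2 ↔
            (¬(i + (n - t) + 1 ≤ k ∧ jf (i + (n - t) + 1) = 2 * n + 1 - t) ∧
             (i + (n - t) ≤ k ∧ jf (i + (n - t)) = 2 * n - t))) ∧
          (c = 1 →
            Ssj (cartanB n) ι M'.toNat t (tab (boxB ι n) s k jf) =
              tab (boxB ι n) s k (Function.update jf i (t + 1)))) ∧
    (Adapted n (cartanC n) ι →
      ∀ (k : ℕ) (s : ℤ) (jf : ℕ → ℕ),
        TabCcond ι n k s jf →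
        ∀ t, 1 ≤ t → t ≤ n - 1 →
        ∀ i, 1 ≤ i → i ≤ k → jf i = t → (i < k → jf (i + 1) ≠ t + 1) →
        ∀ M' : ℤ, M' = s + (k : ℤ) - (i : ℤ) + (PABC ι n t : ℤ) →
        ∀ c : ℚ, c = tab (boxC ι n) s k jf (occPos ι t M'.toNat) →
          1 ≤ M' ∧
          (c = 0 ∨ c = 1 ∨ c = 2) ∧
          (c = 0 ↔
            ((i + (n - t) + 1 ≤ k ∧ jf (i + (n - t) + 1) = 2 * n + 1 - t) ∧
             ¬(i + (n - t) ≤ k ∧ jf (i + (n - t)) = 2 * n - t))) ∧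
          (c = 2 ↔
            (¬(i + (n - t) + 1 ≤ k ∧ jf (i + (n - t) + 1) = 2 * n + 1 - t) ∧
             (i + (n - t) ≤ k ∧ jf (i + (n - t)) = 2 * n - t))) ∧
          (c = 1 →
            Ssj (cartanC n) ι M'.toNat t (tab (boxC ι n) s k jf) =
              tab (boxC ι n) s k (Function.update jf i (t + 1)))) := by
  constructor
  · rw [boxB_eq_weightedBox]
    intro hA k s jf _ hkn hr hinc _ hs t ht htn i hi hik hjt hjn M' hM' c hc
    have hit := hjt ▸ le_apply_of_lt_succ (fun l h h' => (hr l h h').1) hinc hi hik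
    have hM := hM' ▸ one_le_add_PABC hi hik hkn hit (by omega) hs
    exact ⟨hM, coeff_unbarred_BC_general hadm hA ht (by omega) rfl
      (fun _ => cartanB_of_ne (by omega)) hi hik hjt hjn hM' hM hc⟩
  · intro hA k s jf hT t ht htn i hi hik hjt hjn M' hM' c hc
    obtain ⟨hkn, hr, hinc, hs⟩ := hT.of_unbarred hi hik (by omega) (by omega)
    have hpos : ∀ l, 1 ≤ l → l ≤ k → 1 ≤ jf l := fun l h h' => (hr l h h').1
    have hit := hjt ▸ le_apply_of_lt_succ hpos hinc hi hik
    have hM := hM' ▸ one_le_add_PABC hi hik (by omega) hit (by omega) hs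
    rw [tab_boxC_eq_weightedBox (by omega) hpos] at hc ⊢
    rw [tab_boxC_eq_weightedBox (by omega) (one_le_update_apply hpos (by omega))]
    exact ⟨hM, coeff_unbarred_BC_general hadm hA ht (by omega)
      (Function.update_of_ne (by omega) _ _) (fun _ => cartanC_of_ne (by omega))
      hi hik hjt hjn hM' hM hc⟩
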